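/- arXiv:2001.04555 — 5 statements merged into one kernel-verified Lean document; each statement's English description precedes it below -/
import Mathlib

section
/- Let k and l be natural numbers with 0 ≤ l < k. Then the set of rational numbers { a/2^l + b/(2^l·(2^{k−l}−1)) : a, b ∈ ℕ, a ≤ 2^l − 1, b ≤ 2^{k−l} − 1 } is equal to the set { c/(2^k − 2^l) : c ∈ ℕ, c ≤ 2^k − 2^l }. (Equivalently, the rationals in [0,1] expressible by a binary expansion with an l-digit prefix followed by an infinitely repeating (k−l)-digit suffix are exactly the integer multiples of 1/(2^k − 2^l) lying in [0,1].) -/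
/-- The rationals in [0,1] expressible by a binary expansion with an `l`-digit prefix
(value `a/2^l`) followed by an infinitely repeating `(k-l)`-digit suffix
(value `b/(2^l * (2^(k-l) - 1))`) are exactly the integer multiples of
`1/(2^k - 2^l)` lying in `[0,1]`. -/
theorem prefix_suffix_expansions_eq_multiples (k l : ℕ) (hlk : l < k) :
    {q : ℚ | ∃ a b : ℕ, a ≤ 2 ^ l - 1 ∧ b ≤ 2 ^ (k - l) - 1 ∧
      q = (a : ℚ) / 2 ^ l + (b : ℚ) / (2 ^ l * (2 ^ (k - l) - 1))} =
    {q : ℚ | ∃ c : ℕ, c ≤ 2 ^ k - 2 ^ l ∧ q = (c : ℚ) / (2 ^ k - 2 ^ l)} := by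
  obtain ⟨m, rfl⟩ := Nat.exists_eq_add_of_lt hlk
  have e1 : l + m + 1 - l = m + 1 := by omega
  rw [e1]
  obtain ⟨M, hM⟩ : ∃ M, 2 ^ (m + 1) = M + 1 :=
    ⟨2 ^ (m + 1) - 1, by have : 0 < 2 ^ (m + 1) := by positivity
                         omega⟩
  have hM0 : 0 < M := by
    have : 1 < 2 ^ (m + 1) := Nat.one_lt_two_pow (by omega)
    omega
  obtain ⟨P, hP⟩ : ∃ P, 2 ^ l = P + 1 :=
    ⟨2 ^ l - 1, by have : 0 < 2 ^ l := by positivity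
                   omega⟩
  have hMq : (2 : ℚ) ^ (m + 1) = M + 1 := by exact_mod_cast hM
  have hPq : (2 : ℚ) ^ l = P + 1 := by exact_mod_cast hP
  have hk : 2 ^ (l + m + 1) - 2 ^ l = (P + 1) * M := by
    rw [add_assoc, pow_add, hM, hP, mul_add, mul_one, Nat.add_sub_cancel]
  have hkq : (2 : ℚ) ^ (l + m + 1) - 2 ^ l = (P + 1) * M := by
    rw [add_assoc, pow_add, hMq, hPq]; ring
  rw [hk, hkq, hM, hP, hMq, hPq]
  simp only [Nat.add_sub_cancel, add_sub_cancel_right]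
  have hMne : (M : ℚ) ≠ 0 := by exact_mod_cast hM0.ne'
  have hPne : (P : ℚ) + 1 ≠ 0 := by positivity
  have key : ∀ a b : ℕ, (a : ℚ) / (P + 1) + (b : ℚ) / ((P + 1) * M)
      = ((a * M + b : ℕ) : ℚ) / ((P + 1) * M) := by
    intro a b
    push_cast
    field_simp
  ext q
  constructor
  · rintro ⟨a, b, ha, hb, rfl⟩
    refine ⟨a * M + b, ?_, key a b⟩
    have := Nat.mul_le_mul_right M ha
    rw [add_mul, one_mul]
    omega
  · rintro ⟨c, hc, rfl⟩
    rcases hc.lt_or_eq with h | h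
    · refine ⟨c / M, c % M, ?_, (Nat.mod_lt c hM0).le, ?_⟩
      · exact Nat.lt_succ_iff.mp (Nat.div_lt_of_lt_mul (by rwa [mul_comm] at h))
      · rw [key, Nat.div_add_mod']
    · refine ⟨P, M, le_rfl, le_rfl, ?_⟩
      rw [key, h, add_mul, one_mul]
end

section
/- Let t ≥ 1 be an integer and let M ∈ M[n,t]. Suppose that no single-unit transfer improves the objective: for all indices i ≠ j with M_j ≥ 1, F(M + e_i − e_j) ≥ F(M), where e_i denotes the i-th standard unit tuple. Then M minimizes F over M[n,t]: for every W ∈ M[n,t], F(M) ≤ F(W). -/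
theorem aux_discrete (f : ℕ → ℝ) (hc : ∀ k, 2 * f (k+1) ≤ f k + f (k+2)) (l : ℝ) (m : ℕ)
    (h1 : l ≤ f (m+1) - f m) (h2 : ∀ k, m = k + 1 → f (k+1) - f k ≤ l) (w : ℕ) :
    f m + l * ((w : ℝ) - m) ≤ f w := by
  have hmono : Monotone (fun k => f (k+1) - f k) := by
    apply monotone_nat_of_le_succ
    intro k
    have := hc k
    show f (k+1) - f k ≤ f (k+1+1) - f (k+1)
    linarith
  rcases le_total m w with h | h
  · induction w, h using Nat.le_induction with
    | base => simp
    | succ w hw ih =>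
      have h3 : f (m+1) - f m ≤ f (w+1) - f w := hmono hw
      push_cast
      linarith
  · have key : ∀ d w : ℕ, w + d = m → f m + l * ((w : ℝ) - m) ≤ f w := by
      intro d
      induction d with
      | zero => intro w hw; simp at hw; subst hw; simp
      | succ d ih =>
        intro w hw
        have h4 := ih (w+1) (by omega)
        obtain ⟨k, hk⟩ : ∃ k, m = k + 1 := ⟨w + d, by omega⟩
        have h5 := h2 k hk
        have h3 : f (w+1) - f w ≤ f (k+1) - f k := hmono (by omega : w ≤ k)
        push_cast at h4
        linarith
    exact key (m - w) w (by omega)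

theorem aux_convex (g : ℝ → ℝ) (hg : ConvexOn ℝ (Set.Ici 0) g) (q c : ℝ) (hq : 0 < q)
    (hc : 0 < c) (k : ℕ) :
    2 * (q * g (((k+1 : ℕ) : ℝ) / c)) ≤ q * g ((k : ℝ) / c) + q * g (((k+2 : ℕ) : ℝ) / c) := by
  have hx : (k : ℝ) / c ∈ Set.Ici (0 : ℝ) := by simp only [Set.mem_Ici]; positivity
  have hy : ((k+2 : ℕ) : ℝ) / c ∈ Set.Ici (0 : ℝ) := by simp only [Set.mem_Ici]; positivity
  have h := hg.2 hx hy (by norm_num : (0 : ℝ) ≤ 1/2) (by norm_num : (0 : ℝ) ≤ 1/2) (by norm_num)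
  have e : (1/2 : ℝ) • ((k : ℝ) / c) + (1/2 : ℝ) • (((k+2 : ℕ) : ℝ) / c)
      = ((k+1 : ℕ) : ℝ) / c := by
    simp only [smul_eq_mul]; push_cast; ring
  rw [e] at h
  simp only [smul_eq_mul] at h
  nlinarith [mul_le_mul_of_nonneg_left h hq.le]

/-- If no single-unit transfer (incrementing one coordinate and decrementing
another) improves the objective `F(M) = Σ_i p_i * g(M_i / (Z p_i))`, then `M`
minimizes `F` over all tuples of nonnegative integers summing to `t`. -/
theorem local_transfer_optimal_implies_global (n : ℕ) (hn : 0 < n)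
    (p : Fin n → ℝ) (hp : ∀ i, 0 < p i) (hpsum : ∑ i, p i = 1)
    (Z : ℕ) (hZ : 0 < Z)
    (g : ℝ → ℝ) (hg : ConvexOn ℝ (Set.Ici 0) g) (hg1 : g 1 = 0)
    (t : ℕ) (ht : 1 ≤ t) (M : Fin n → ℕ) (hM : ∑ i, M i = t)
    (hlocal : ∀ i j : Fin n, i ≠ j → 1 ≤ M j →
      ∑ r, p r * g ((M r : ℝ) / (Z * p r)) ≤
        ∑ r, p r * g (((M r + (if r = i then 1 else 0) -
          (if r = j then 1 else 0) : ℕ) : ℝ) / (Z * p r))) :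
    ∀ W : Fin n → ℕ, ∑ i, W i = t →
      ∑ r, p r * g ((M r : ℝ) / (Z * p r)) ≤
        ∑ r, p r * g ((W r : ℝ) / (Z * p r)) := by
  intro W hW
  obtain ⟨f, hf⟩ : ∃ f : Fin n → ℕ → ℝ, f = fun r (k : ℕ) => p r * g ((k : ℝ) / (Z * p r)) := ⟨_, rfl⟩
  have hfr : ∀ r (k : ℕ), p r * g ((k : ℝ) / (Z * p r)) = f r k := by intro r k; rw [hf]
  have hZ' : (0 : ℝ) < Z := by exact_mod_cast hZ
  have hconv : ∀ r k, 2 * f r (k+1) ≤ f r k + f r (k+2) := by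
    intro r k
    simp only [← hfr]
    exact aux_convex g hg (p r) _ (hp r) (mul_pos hZ' (hp r)) k
  simp only [hfr] at hlocal ⊢
  have hex : ∀ i j : Fin n, ∀ k, M j = k + 1 →
      f j (k+1) - f j k ≤ f i (M i + 1) - f i (M i) := by
    intro i j k hk
    by_cases hij : i = j
    · subst hij
      rw [hk]
      have := hconv i k
      show _ ≤ f i (k+2) - _
      linarith
    · have h := hlocal i j hij (by omega)
      rw [← sub_nonneg, ← Finset.sum_sub_distrib,
        ← Finset.sum_subset (Finset.subset_univ {i, j}), Finset.sum_pair hij] at h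
      · have hji : ¬ j = i := fun h => hij h.symm
        simp only [hij, hji, if_true, if_false, hk] at h
        simp at h
        linarith
      · intro r _ hr
        simp at hr
        simp [hr.1, hr.2]
  have : Nonempty (Fin n) := ⟨⟨0, hn⟩⟩
  obtain ⟨i0, hi0⟩ := Finite.exists_min (fun i => f i (M i + 1) - f i (M i))
  have hs := Finset.sum_le_sum (fun r (_ : r ∈ Finset.univ) =>
    aux_discrete (f r) (hconv r) _ (M r) (hi0 r) (fun k hk => hex i0 r k hk) (W r))
  rw [Finset.sum_add_distrib, ← Finset.mul_sum, Finset.sum_sub_distrib] at hs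
  have e : ∑ i, (W i : ℝ) = ∑ i, (M i : ℝ) := by
    exact_mod_cast hW.trans hM.symm
  rw [e] at hs
  simpa using hs
end

section
/- Let t ≥ 0 be an integer and suppose M = (M_1, …, M_n) minimizes the objective F over M[n,t]. Let u be any index attaining the minimum over i ∈ {1, …, n} of the increment cost p_i · ( g((M_i + 1)/(Z p_i)) − g(M_i/(Z p_i)) ). Then the tuple M⁺ defined by M⁺_i = M_i + 1 if i = u and M⁺_i = M_i otherwise minimizes F over M[n, t+1]. -/
/-- Incrementing one coordinate adds the increment cost. -/
lemma sum_incr_aux {n : ℕ} (f : Fin n → ℕ → ℝ) (V : Fin n → ℕ) (j : Fin n) :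
    ∑ i, f i (V i + (if i = j then 1 else 0)) =
      ∑ i, f i (V i) + (f j (V j + 1) - f j (V j)) := by
  have h : ∀ i, f i (V i + (if i = j then 1 else 0)) =
      f i (V i) + (if i = j then (f j (V j + 1) - f j (V j)) else 0) := by
    intro i
    by_cases hij : i = j
    · subst hij; simp
    · simp [hij]
  rw [Finset.sum_congr rfl (fun i _ => h i), Finset.sum_add_distrib]
  simp

/-- Greedy step for separable discretely convex objectives. -/
lemma greedy_aux {n : ℕ} (f : Fin n → ℕ → ℝ)
    (hf : ∀ i, Monotone (fun k => f i (k + 1) - f i k))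
    (t : ℕ) (M : Fin n → ℕ) (hM : ∑ i, M i = t)
    (hopt : ∀ W : Fin n → ℕ, ∑ i, W i = t → ∑ r, f r (M r) ≤ ∑ r, f r (W r))
    (u : Fin n) (hu : ∀ i, f u (M u + 1) - f u (M u) ≤ f i (M i + 1) - f i (M i))
    (W : Fin n → ℕ) (hW : ∑ i, W i = t + 1) :
    ∑ r, f r (M r + (if r = u then 1 else 0)) ≤ ∑ r, f r (W r) := by
  obtain ⟨j, -, hj⟩ : ∃ j ∈ Finset.univ, M j < W j :=
    Finset.exists_lt_of_sum_lt (by omega)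
  obtain ⟨V, rfl⟩ : ∃ V : Fin n → ℕ, W = fun i => V i + (if i = j then 1 else 0) := by
    refine ⟨fun i => W i - (if i = j then 1 else 0), ?_⟩
    funext i
    by_cases hij : i = j
    · subst hij; simp; omega
    · simp [hij]
  have hV : ∑ i, V i = t := by
    rw [Finset.sum_add_distrib] at hW
    simpa using hW
  have h1 := hopt V hV
  have h2 : M j ≤ V j := by simp at hj; omega
  have h3 := hf j h2
  have h4 := hu j
  rw [sum_incr_aux, sum_incr_aux]
  simp only at h3
  linarith

/-- If `M` minimizes `F(M) = Σ_i p_i * g(M_i / (Z p_i))` over tuples summing to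
`t`, and `u` attains the minimal increment cost, then `M + e_u` minimizes `F`
over tuples summing to `t + 1`. -/
theorem increment_min_cost_optimal (n : ℕ) (hn : 0 < n)
    (p : Fin n → ℝ) (hp : ∀ i, 0 < p i) (hpsum : ∑ i, p i = 1)
    (Z : ℕ) (hZ : 0 < Z)
    (g : ℝ → ℝ) (hg : ConvexOn ℝ (Set.Ici 0) g) (hg1 : g 1 = 0)
    (t : ℕ) (M : Fin n → ℕ) (hM : ∑ i, M i = t)
    (hopt : ∀ W : Fin n → ℕ, ∑ i, W i = t →
      ∑ r, p r * g ((M r : ℝ) / (Z * p r)) ≤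
        ∑ r, p r * g ((W r : ℝ) / (Z * p r)))
    (u : Fin n)
    (hu : ∀ i : Fin n,
      p u * (g (((M u : ℝ) + 1) / (Z * p u)) - g ((M u : ℝ) / (Z * p u))) ≤
        p i * (g (((M i : ℝ) + 1) / (Z * p i)) - g ((M i : ℝ) / (Z * p i)))) :
    ∀ W : Fin n → ℕ, ∑ i, W i = t + 1 →
      ∑ r, p r * g (((M r + (if r = u then 1 else 0) : ℕ) : ℝ) / (Z * p r)) ≤
        ∑ r, p r * g ((W r : ℝ) / (Z * p r)) := by
  intro W hW
  refine greedy_aux (fun r k => p r * g ((k : ℝ) / (Z * p r))) ?_ t M hM hopt u ?_ W hW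
  · intro i
    refine monotone_nat_of_le_succ fun k => ?_
    have hc : (0 : ℝ) < Z * p i := mul_pos (by exact_mod_cast hZ) (hp i)
    have hx : (k : ℝ) / (Z * p i) ∈ Set.Ici (0 : ℝ) := Set.mem_Ici.2 (by positivity)
    have hy : ((k : ℝ) + 2) / (Z * p i) ∈ Set.Ici (0 : ℝ) := Set.mem_Ici.2 (by positivity)
    have h := hg.2 hx hy (show (0 : ℝ) ≤ 1 / 2 by norm_num)
      (show (0 : ℝ) ≤ 1 / 2 by norm_num) (by norm_num)
    have he : (1 / 2 : ℝ) • ((k : ℝ) / (Z * p i)) + (1 / 2 : ℝ) • (((k : ℝ) + 2) / (Z * p i))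
        = ((k : ℝ) + 1) / (Z * p i) := by
      simp only [smul_eq_mul]; ring
    rw [he] at h
    simp only [smul_eq_mul] at h
    have h' := mul_le_mul_of_nonneg_left h (hp i).le
    have e2 : ((k + 1 + 1 : ℕ) : ℝ) = (k : ℝ) + 2 := by push_cast; ring
    have e1 : ((k + 1 : ℕ) : ℝ) = (k : ℝ) + 1 := by push_cast; ring
    simp only [e2, e1]
    linarith
  · intro i
    have := hu i
    push_cast
    linarith
end

section
/- Let t ≥ 1 be an integer and suppose M = (M_1, …, M_n) minimizes the objective F over M[n,t]. Let u be any index attaining the minimum, over those i ∈ {1, …, n} with M_i ≥ 1, of the decrement cost p_i · ( g((M_i − 1)/(Z p_i)) − g(M_i/(Z p_i)) ). Then the tuple M⁻ defined by M⁻_i = M_i − 1 if i = u and M⁻_i = M_i otherwise minimizes F over M[n, t−1]. -/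
theorem aux_sum_update {n : ℕ} (f : Fin n → ℕ → ℝ) (W : Fin n → ℕ) (j : Fin n) (a : ℕ) :
    ∑ r, f r (Function.update W j a r) = ∑ r, f r (W r) + (f j a - f j (W j)) := by
  rw [← Finset.add_sum_erase _ _ (Finset.mem_univ j),
    ← Finset.add_sum_erase Finset.univ (fun r => f r (W r)) (Finset.mem_univ j)]
  have h : ∑ r ∈ Finset.univ.erase j, f r (Function.update W j a r)
      = ∑ r ∈ Finset.univ.erase j, f r (W r) := by
    apply Finset.sum_congr rfl
    intro r hr
    rw [Function.update_of_ne (Finset.ne_of_mem_erase hr)]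
  rw [h, Function.update_self]
  ring

theorem aux_main {n : ℕ} (f : Fin n → ℕ → ℝ)
    (hf : ∀ i, Monotone (fun k => f i (k + 1) - f i k))
    (t : ℕ) (ht : 1 ≤ t) (M : Fin n → ℕ) (hM : ∑ i, M i = t)
    (hopt : ∀ W : Fin n → ℕ, ∑ i, W i = t → ∑ r, f r (M r) ≤ ∑ r, f r (W r))
    (u : Fin n)
    (hu : ∀ i : Fin n, 1 ≤ M i →
      f u (M u - 1) - f u (M u) ≤ f i (M i - 1) - f i (M i))
    (W : Fin n → ℕ) (hW : ∑ i, W i = t - 1) :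
    ∑ r, f r (Function.update M u (M u - 1) r) ≤ ∑ r, f r (W r) := by
  obtain ⟨j, -, hj⟩ : ∃ j ∈ Finset.univ, W j < M j :=
    Finset.exists_lt_of_sum_lt (by omega)
  have hs : ∑ i, Function.update W j (W j + 1) i = t := by
    have h := aux_sum_update (fun _ k => (k : ℝ)) W j (W j + 1)
    have h2 : ((∑ i, Function.update W j (W j + 1) i : ℕ) : ℝ)
        = ((∑ i, W i + 1 : ℕ) : ℝ) := by
      push_cast at h ⊢
      linarith
    have h3 := Nat.cast_injective h2
    omega
  have h1 := hopt _ hs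
  rw [aux_sum_update] at h1
  rw [aux_sum_update]
  have h2 := hu j (by omega)
  have h3 := hf j (show W j ≤ M j - 1 by omega)
  simp only [show M j - 1 + 1 = M j by omega] at h3
  linarith

theorem aux_convex_s8 (p : ℝ) (hp : 0 < p) (Z : ℕ) (g : ℝ → ℝ)
    (hg : ConvexOn ℝ (Set.Ici 0) g) :
    Monotone (fun k : ℕ => p * g (((k + 1 : ℕ) : ℝ) / (Z * p)) - p * g ((k : ℝ) / (Z * p))) := by
  apply monotone_nat_of_le_succ
  intro k
  have hx : (k : ℝ) / (Z * p) ∈ Set.Ici (0 : ℝ) := Set.mem_Ici.2 (by positivity)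
  have hy : ((k + 1 + 1 : ℕ) : ℝ) / (Z * p) ∈ Set.Ici (0 : ℝ) := Set.mem_Ici.2 (by positivity)
  have h := hg.2 hx hy (show (0 : ℝ) ≤ 1 / 2 by norm_num) (show (0 : ℝ) ≤ 1 / 2 by norm_num)
    (by norm_num)
  have e : (1 / 2 : ℝ) • ((k : ℝ) / (Z * p)) + (1 / 2 : ℝ) • (((k + 1 + 1 : ℕ) : ℝ) / (Z * p))
      = ((k + 1 : ℕ) : ℝ) / (Z * p) := by
    simp only [smul_eq_mul]
    push_cast
    ring
  rw [e] at h
  simp only [smul_eq_mul] at h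
  have := mul_le_mul_of_nonneg_left h hp.le
  linarith


/-- If `M` minimizes `F(M) = Σ_i p_i * g(M_i / (Z p_i))` over tuples summing to
`t ≥ 1`, and `u` attains the minimal decrement cost among coordinates with
`M_i ≥ 1`, then `M - e_u` minimizes `F` over tuples summing to `t - 1`. -/
theorem decrement_min_cost_optimal (n : ℕ) (hn : 0 < n)
    (p : Fin n → ℝ) (hp : ∀ i, 0 < p i) (hpsum : ∑ i, p i = 1)
    (Z : ℕ) (hZ : 0 < Z)
    (g : ℝ → ℝ) (hg : ConvexOn ℝ (Set.Ici 0) g) (hg1 : g 1 = 0)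
    (t : ℕ) (ht : 1 ≤ t) (M : Fin n → ℕ) (hM : ∑ i, M i = t)
    (hopt : ∀ W : Fin n → ℕ, ∑ i, W i = t →
      ∑ r, p r * g ((M r : ℝ) / (Z * p r)) ≤
        ∑ r, p r * g ((W r : ℝ) / (Z * p r)))
    (u : Fin n) (hu1 : 1 ≤ M u)
    (hu : ∀ i : Fin n, 1 ≤ M i →
      p u * (g (((M u : ℝ) - 1) / (Z * p u)) - g ((M u : ℝ) / (Z * p u))) ≤
        p i * (g (((M i : ℝ) - 1) / (Z * p i)) - g ((M i : ℝ) / (Z * p i)))) :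
    ∀ W : Fin n → ℕ, ∑ i, W i = t - 1 →
      ∑ r, p r * g (((M r - (if r = u then 1 else 0) : ℕ) : ℝ) / (Z * p r)) ≤
        ∑ r, p r * g ((W r : ℝ) / (Z * p r)) := by
  intro W hW
  have key := aux_main (fun i k => p i * g ((k : ℝ) / (Z * p i)))
    (fun i => aux_convex_s8 (p i) (hp i) Z g hg) t ht M hM hopt u
    (by
      intro i hi
      have h := hu i hi
      simp only [Nat.cast_sub hu1, Nat.cast_sub hi, Nat.cast_one]
      linarith) W hW
  refine le_trans (le_of_eq ?_) key
  apply Finset.sum_congr rfl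
  intro r _
  by_cases h : r = u
  · subst h
    simp
  · simp [h]
end

section
/- Let p = (p_1, …, p_n) be a probability distribution with p_i ≥ 0 for each i and Σ p_i = 1, and let Z be a positive integer. Suppose M = (M_1, …, M_n) ∈ M[n,Z] minimizes the L1 objective Σ_{i=1}^n |M_i − Z p_i| over M[n,Z]. Then for every i, ⌊Z p_i⌋ ≤ M_i ≤ ⌊Z p_i⌋ + 1. -/
theorem sum_split_two {n : ℕ} {A : Type*} [AddCommMonoid A] (f : Fin n → A) (a b : Fin n)
    (hab : a ≠ b) : ∑ i, f i = f a + (f b + ∑ i ∈ (Finset.univ.erase a).erase b, f i) := by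
  rw [Finset.add_sum_erase _ _ (by simp [hab.symm]), Finset.add_sum_erase _ _ (by simp)]

theorem exchange_ineq (n : ℕ) (q : Fin n → ℝ) (Z : ℕ) (M : Fin n → ℕ) (hM : ∑ i, M i = Z)
    (hopt : ∀ W : Fin n → ℕ, ∑ i, W i = Z →
      ∑ i, |(M i : ℝ) - q i| ≤ ∑ i, |(W i : ℝ) - q i|)
    (a b : Fin n) (hab : a ≠ b) (hb : 1 ≤ M b) :
    |(M a : ℝ) - q a| + |(M b : ℝ) - q b| ≤
      |(M a : ℝ) + 1 - q a| + |(M b : ℝ) - 1 - q b| := by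
  set W : Fin n → ℕ := fun k => if k = a then M a + 1 else if k = b then M b - 1 else M k with hW
  have ha' : W a = M a + 1 := by simp [hW]
  have hb' : W b = M b - 1 := by simp [hW, hab.symm]
  have hr : ∀ k ∈ (Finset.univ.erase a).erase b, W k = M k := by
    intro k hk
    simp only [Finset.mem_erase] at hk
    simp [hW, hk.1, hk.2.1]
  have hs : ∑ i, W i = Z := by
    have e : ∑ i ∈ (Finset.univ.erase a).erase b, W i =
        ∑ i ∈ (Finset.univ.erase a).erase b, M i := Finset.sum_congr rfl hr
    rw [← hM, sum_split_two W a b hab, sum_split_two M a b hab, e, ha', hb']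
    omega
  have h := hopt W hs
  rw [sum_split_two _ a b hab, sum_split_two (fun i => |(W i : ℝ) - q i|) a b hab,
    Finset.sum_congr rfl (fun k hk => by rw [hr k hk] :
      ∀ k ∈ (Finset.univ.erase a).erase b, |(W k : ℝ) - q k| = |(M k : ℝ) - q k|), ha', hb'] at h
  push_cast [Nat.cast_sub hb] at h
  linarith

/-- Any minimizer of the `L1` objective `Σ_i |M_i - Z p_i|` over tuples of
nonnegative integers summing to `Z` satisfies `⌊Z p_i⌋ ≤ M_i ≤ ⌊Z p_i⌋ + 1`
for every `i`. -/
theorem l1_minimizer_floor_bounds (n : ℕ) (hn : 0 < n)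
    (p : Fin n → ℝ) (hp : ∀ i, 0 ≤ p i) (hpsum : ∑ i, p i = 1)
    (Z : ℕ) (hZ : 0 < Z) (M : Fin n → ℕ) (hM : ∑ i, M i = Z)
    (hopt : ∀ W : Fin n → ℕ, ∑ i, W i = Z →
      ∑ i, |(M i : ℝ) - (Z : ℝ) * p i| ≤ ∑ i, |(W i : ℝ) - (Z : ℝ) * p i|) :
    ∀ i, ⌊(Z : ℝ) * p i⌋ ≤ (M i : ℤ) ∧ (M i : ℤ) ≤ ⌊(Z : ℝ) * p i⌋ + 1 := by
  have hsum : ∑ i, (M i : ℝ) = ∑ i, (Z : ℝ) * p i := by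
    rw [← Finset.mul_sum, hpsum, mul_one, ← hM]
    push_cast
    rfl
  have hq : ∀ i, 0 ≤ (Z : ℝ) * p i := fun i => mul_nonneg (by positivity) (hp i)
  have hex := exchange_ineq n (fun i => (Z : ℝ) * p i) Z M hM hopt
  intro i
  constructor
  · by_contra! hlt
    have h1 : (M i : ℝ) + 1 ≤ (Z : ℝ) * p i := by
      have h2 : ((M i : ℤ) + 1) ≤ ⌊(Z : ℝ) * p i⌋ := by omega
      have h3 := Int.le_floor.mp h2
      push_cast at h3
      exact h3
    obtain ⟨j, hj⟩ : ∃ j, (Z : ℝ) * p j < M j := by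
      by_contra! hall
      have := Finset.sum_lt_sum (fun k _ => hall k) ⟨i, Finset.mem_univ i, by linarith⟩
      linarith
    have hij : i ≠ j := by
      rintro rfl
      linarith
    have hMj : 1 ≤ M j := by
      have : (0 : ℝ) < M j := lt_of_le_of_lt (hq j) hj
      exact_mod_cast this
    have h := hex i j hij hMj
    rw [abs_of_nonpos (by linarith : (M i : ℝ) - Z * p i ≤ 0),
      abs_of_nonpos (by linarith : (M i : ℝ) + 1 - Z * p i ≤ 0),
      abs_of_pos (by linarith : 0 < (M j : ℝ) - Z * p j)] at h
    rcases abs_cases ((M j : ℝ) - 1 - Z * p j) with h4 | h4 <;> linarith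
  · by_contra! hlt
    have h1 : (Z : ℝ) * p i + 1 < M i := by
      have h2 := Int.lt_floor_add_one ((Z : ℝ) * p i)
      have h3 : ⌊(Z : ℝ) * p i⌋ + 2 ≤ (M i : ℤ) := by omega
      have h4 : ((⌊(Z : ℝ) * p i⌋ : ℤ) : ℝ) + 2 ≤ (M i : ℝ) := by exact_mod_cast h3
      linarith
    obtain ⟨j, hj⟩ : ∃ j, (M j : ℝ) < (Z : ℝ) * p j := by
      by_contra! hall
      have := Finset.sum_lt_sum (fun k _ => hall k) ⟨i, Finset.mem_univ i, by linarith⟩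
      linarith
    have hji : j ≠ i := by
      rintro rfl
      linarith
    have hMi : 1 ≤ M i := by
      have : (0 : ℝ) < M i := by linarith [hq i]
      exact_mod_cast this
    have h := hex j i hji hMi
    rw [abs_of_neg (by linarith : (M j : ℝ) - Z * p j < 0),
      abs_of_pos (by linarith : 0 < (M i : ℝ) - Z * p i),
      abs_of_pos (by linarith : 0 < (M i : ℝ) - 1 - Z * p i)] at h
    rcases abs_cases ((M j : ℝ) + 1 - Z * p j) with h4 | h4 <;> linarith
end
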